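/- arXiv:2209.11444 — 4 statements merged into one kernel-verified Lean document; each statement's English description precedes it below -/
import Mathlib

section
/- Let q₂* ∈ (0,1) and δ > 0. Then F is Cauchy continuous on Ñ₂((1,q₂*), δ): for every Cauchy sequence (aₘ) contained in Ñ₂((1,q₂*), δ), the sequence (F(aₘ)) is a Cauchy sequence in ℝ. Consequently, F restricted to Ñ₂((1,q₂*), δ) admits a unique continuous extension to the closure of Ñ₂((1,q₂*), δ). -/
open Set MeasureTheory

/-- `Ñ₂(a,δ) = {x ∈ (0,1)² : ‖x − a‖ < δ}` with the Euclidean norm on ℝ². -/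
def nbhd2 (a : ℝ × ℝ) (δ : ℝ) : Set (ℝ × ℝ) :=
  {x : ℝ × ℝ | x.1 ∈ Set.Ioo (0 : ℝ) 1 ∧ x.2 ∈ Set.Ioo (0 : ℝ) 1 ∧
    Real.sqrt ((x.1 - a.1) ^ 2 + (x.2 - a.2) ^ 2) < δ}

/-- Almost every point of the plane has first coordinate different from `c`. -/
theorem ae_fst_ne (c : ℝ) : ∀ᵐ v : ℝ × ℝ, v.1 ≠ c :=
  Measure.quasiMeasurePreserving_fst.ae (Measure.ae_ne volume c)

/-- Almost every point of the plane has second coordinate different from `c`. -/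
theorem ae_snd_ne (c : ℝ) : ∀ᵐ v : ℝ × ℝ, v.2 ≠ c :=
  Measure.quasiMeasurePreserving_snd.ae (Measure.ae_ne volume c)

/-- The indicator of `s < t` is continuous in `t` away from `t = s`. -/
theorem continuousAt_ite_lt {s t : ℝ} (h : s ≠ t) :
    ContinuousAt (fun x : ℝ => if s < x then (1 : ℝ) else 0) t := by
  rcases h.lt_or_gt with h | h
  · refine (continuousAt_const (y := (1 : ℝ))).congr ?_
    filter_upwards [lt_mem_nhds h] with x hx
    simp [hx]
  · refine (continuousAt_const (y := (0 : ℝ))).congr ?_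
    filter_upwards [gt_mem_nhds h] with x hx
    simp [hx.le]

/-- The integral of an integrable function over the lower-left quadrant at `q` is continuous in `q`
when the measure is absolutely continuous. -/
theorem continuous_integral_quadrant {μ : Measure (ℝ × ℝ)} (habs : μ ≪ volume)
    {m : ℝ × ℝ → ℝ} (hm : Integrable m μ) :
    Continuous fun q : ℝ × ℝ => ∫ v, m v * (if v.1 < q.1 then (1 : ℝ) else 0) *
      (if v.2 < q.2 then (1 : ℝ) else 0) ∂μ := by
  refine continuous_iff_continuousAt.2 fun q => ?_
  refine continuousAt_of_dominated (bound := fun v => ‖m v‖) ?_ ?_ hm.norm ?_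
  · refine Filter.Eventually.of_forall fun p => ?_
    refine (hm.aestronglyMeasurable.mul ?_).mul ?_
    · exact (Measurable.ite (measurableSet_lt measurable_fst measurable_const)
        measurable_const measurable_const).aestronglyMeasurable
    · exact (Measurable.ite (measurableSet_lt measurable_snd measurable_const)
        measurable_const measurable_const).aestronglyMeasurable
  · refine Filter.Eventually.of_forall fun p => Filter.Eventually.of_forall fun v => ?_
    split_ifs <;> simp
  · filter_upwards [habs.ae_le (ae_fst_ne q.1), habs.ae_le (ae_snd_ne q.2)] with v h₁ h₂
    have hfst : ContinuousAt (fun p : ℝ × ℝ => if v.1 < p.1 then (1 : ℝ) else 0) q :=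
      (continuousAt_ite_lt h₁).comp continuousAt_fst
    have hsnd : ContinuousAt (fun p : ℝ × ℝ => if v.2 < p.2 then (1 : ℝ) else 0) q :=
      (continuousAt_ite_lt h₂).comp continuousAt_snd
    exact (continuousAt_const.mul hfst).mul hsnd

/-- With `μ` a probability measure on ℝ² absolutely continuous
w.r.t. Lebesgue measure and supported in `[0,1]²`, `m` μ-integrable, and
`F(q₁,q₂) = ∫ m(v)·𝟙{v₁<q₁}·𝟙{v₂<q₂} dμ`, for `q₂* ∈ (0,1)` and `δ > 0`:
`F` is Cauchy continuous on `Ñ₂((1,q₂*),δ)`, and hence admits a unique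
continuous extension to the closure of `Ñ₂((1,q₂*),δ)`. -/
theorem stmt2 (μ : Measure (ℝ × ℝ)) [IsProbabilityMeasure μ]
    (habs : μ ≪ volume)
    (hsupp : μ ((Set.Icc (0 : ℝ) 1 ×ˢ Set.Icc (0 : ℝ) 1)ᶜ) = 0)
    (m : ℝ × ℝ → ℝ) (hm : Integrable m μ)
    (F : ℝ × ℝ → ℝ)
    (hF : ∀ q : ℝ × ℝ, F q =
      ∫ v, m v * (if v.1 < q.1 then (1 : ℝ) else 0) *
        (if v.2 < q.2 then (1 : ℝ) else 0) ∂μ)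
    (q₂star δ : ℝ) (hq : q₂star ∈ Set.Ioo (0 : ℝ) 1) (hδ : 0 < δ) :
    (∀ a : ℕ → ℝ × ℝ, (∀ n, a n ∈ nbhd2 (1, q₂star) δ) → CauchySeq a →
      CauchySeq (fun n => F (a n))) ∧
    (∃ fbar : ℝ × ℝ → ℝ,
      ContinuousOn fbar (closure (nbhd2 (1, q₂star) δ)) ∧
      (∀ x ∈ nbhd2 (1, q₂star) δ, fbar x = F x) ∧
      ∀ g : ℝ × ℝ → ℝ, ContinuousOn g (closure (nbhd2 (1, q₂star) δ)) →
        (∀ x ∈ nbhd2 (1, q₂star) δ, g x = F x) →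
        ∀ x ∈ closure (nbhd2 (1, q₂star) δ), g x = fbar x) := by
  have hcont : Continuous F := by
    rw [funext hF]
    exact continuous_integral_quadrant habs hm
  refine ⟨fun a _ ha => ?_, F, hcont.continuousOn, fun _ _ => rfl, fun g hg hgF x hx => ?_⟩
  · obtain ⟨l, hl⟩ := cauchySeq_tendsto_of_complete ha
    exact ((hcont.tendsto l).comp hl).cauchySeq
  · exact Set.EqOn.of_subset_closure (s := nbhd2 (1, q₂star) δ) hgF hg hcont.continuousOn
      subset_closure subset_rfl hx
end

section
/- Let q₁* ∈ (0,1). Then: (i) for every t ∈ (0,1), G₀(t, q₂) converges to Φ₀(t) := ∫ m(v)·𝟙{t ≤ v₁} dμ(v) as q₂ → 1 from the left; and (ii) if g₀ : ℝ → ℝ is integrable on (0,1), continuous at q₁*, and satisfies Φ₀(t) = ∫ₜ¹ g₀(s) ds for every t ∈ [0,1], then Φ₀ is differentiable at q₁* with Φ₀′(q₁*) = −g₀(q₁*). (Thus minus the q₁-partial derivative at (q₁*,1) of the continuous extension of G₀ identifies the conditional expectation E[G(Y₀) | V₁ = q₁*] = g₀(q₁*).) -/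
open Set MeasureTheory

/-- A left inverse of a strictly monotone `ψ` is monotone on the range of `ψ`. -/
theorem monotoneOn_range_of_leftInverse {ψ ψinv : ℝ → ℝ} (hψm : StrictMono ψ)
    (hψinv : Function.LeftInverse ψinv ψ) : MonotoneOn ψinv (range ψ) := by
  rintro _ ⟨x, rfl⟩ _ ⟨y, rfl⟩ hxy
  rw [hψinv x, hψinv y]
  exact hψm.le_iff_le.1 hxy

/-- If `μ` is absolutely continuous and supported in the unit square, its second coordinate lies
almost surely in the open unit interval. -/
theorem ae_snd_mem_Ioo {μ : Measure (ℝ × ℝ)} (habs : μ ≪ volume)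
    (hsupp : μ ((Icc (0 : ℝ) 1 ×ˢ Icc (0 : ℝ) 1)ᶜ) = 0) :
    ∀ᵐ v ∂μ, v.2 ∈ Ioo (0 : ℝ) 1 := by
  have hne : ∀ c : ℝ, ∀ᵐ v ∂μ, v.2 ≠ c := fun c =>
    habs.ae_le (Measure.quasiMeasurePreserving_snd.ae (Measure.ae_ne volume c))
  have hmem : ∀ᵐ v ∂μ, v ∈ Icc (0 : ℝ) 1 ×ˢ Icc (0 : ℝ) 1 := hsupp
  filter_upwards [hmem, hne 0, hne 1] with v hv h0 h1
  exact ⟨lt_of_le_of_ne hv.2.1 h0.symm, lt_of_le_of_ne hv.2.2 h1⟩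

/-- A function that is monotone on a measurable set carrying the second coordinate is
a.e.-measurable as a function of that coordinate. -/
theorem aemeasurable_comp_snd_of_monotoneOn {μ : Measure (ℝ × ℝ)} {f : ℝ → ℝ} {s : Set ℝ}
    (hs : MeasurableSet s) (hf : MonotoneOn f s) (hμ : ∀ᵐ v ∂μ, v.2 ∈ s) :
    AEMeasurable (fun v : ℝ × ℝ => f v.2) μ := by
  have h := aemeasurable_restrict_of_monotoneOn (μ := μ.map Prod.snd) hs hf
  rw [Measure.restrict_eq_self_of_ae_mem
    ((ae_map_iff measurable_snd.aemeasurable hs).2 hμ)] at h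
  exact h.comp_measurable measurable_snd

theorem aestronglyMeasurable_ite_le {α : Type*} [MeasurableSpace α] {μ : Measure α}
    {f g : α → ℝ} (hf : AEMeasurable f μ) (hg : AEMeasurable g μ) :
    AEStronglyMeasurable (fun a => if f a ≤ g a then (1 : ℝ) else 0) μ := by
  have h : AEMeasurable ({a | f a ≤ g a}.indicator fun _ => (1 : ℝ)) μ :=
    aemeasurable_const.indicator₀ (nullMeasurableSet_le hf hg)
  exact h.aestronglyMeasurable

/-- The lower-limit derivative of `∫ s in t..1, g s` at an interior continuity point. -/
theorem hasDerivAt_integral_left_of_integrableOn_Ioo {g : ℝ → ℝ} {a b x : ℝ}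
    (hg : IntegrableOn g (Ioo a b)) (hx : x ∈ Ioo a b) (hc : ContinuousAt g x) :
    HasDerivAt (fun t => ∫ s in t..b, g s) (-(g x)) x := by
  refine intervalIntegral.integral_hasDerivAt_left ?_
    ⟨Ioo a b, Ioo_mem_nhds hx.1 hx.2, hg.aestronglyMeasurable⟩ hc
  rw [intervalIntegrable_iff_integrableOn_Ioo_of_le hx.2.le]
  exact hg.mono_set (Ioo_subset_Ioo_left hx.1.le)

/-- With `μ` a probability measure on ℝ² absolutely continuous
w.r.t. Lebesgue measure and supported in `[0,1]²`, `m` μ-integrable, `φ, ψ`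
continuous strictly increasing bijections from ℝ onto `(0,1)` with inverses
`φinv, ψinv`, and
`G₀(q₁,q₂) = ∫ m(v)·𝟙{q₁ ≤ v₁}·𝟙{φ(ψ⁻¹(v₂) − ψ⁻¹(q₂) + φ⁻¹(q₁)) ≤ v₁} dμ`
on `(0,1)²`, for `q₁* ∈ (0,1)`: (i) for every `t ∈ (0,1)`,
`G₀(t,q₂) → Φ₀(t) := ∫ m(v)·𝟙{t ≤ v₁} dμ` as `q₂ → 1⁻`; (ii) if `g₀` is
integrable on `(0,1)`, continuous at `q₁*`, with `Φ₀(t) = ∫ₜ¹ g₀` for all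
`t ∈ [0,1]`, then `Φ₀` is differentiable at `q₁*` with derivative `−g₀(q₁*)`. -/
theorem stmt7 (μ : Measure (ℝ × ℝ)) [IsProbabilityMeasure μ]
    (habs : μ ≪ volume)
    (hsupp : μ ((Set.Icc (0 : ℝ) 1 ×ˢ Set.Icc (0 : ℝ) 1)ᶜ) = 0)
    (m : ℝ × ℝ → ℝ) (hm : Integrable m μ)
    (φ ψ φinv ψinv : ℝ → ℝ)
    (hφc : Continuous φ) (hφm : StrictMono φ)
    (hφrange : Set.range φ = Set.Ioo (0 : ℝ) 1)
    (hφinv : ∀ x : ℝ, φinv (φ x) = x)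
    (hψc : Continuous ψ) (hψm : StrictMono ψ)
    (hψrange : Set.range ψ = Set.Ioo (0 : ℝ) 1)
    (hψinv : ∀ x : ℝ, ψinv (ψ x) = x)
    (G₀ : ℝ × ℝ → ℝ)
    (hG₀ : ∀ q : ℝ × ℝ, q.1 ∈ Set.Ioo (0 : ℝ) 1 → q.2 ∈ Set.Ioo (0 : ℝ) 1 →
      G₀ q = ∫ v, m v * (if q.1 ≤ v.1 then (1 : ℝ) else 0) *
        (if φ (ψinv v.2 - ψinv q.2 + φinv q.1) ≤ v.1 then (1 : ℝ) else 0) ∂μ)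
    (q₁star : ℝ) (hq : q₁star ∈ Set.Ioo (0 : ℝ) 1) :
    (∀ t ∈ Set.Ioo (0 : ℝ) 1,
      Filter.Tendsto (fun q₂ => G₀ (t, q₂)) (nhdsWithin 1 (Set.Iio 1))
        (nhds (∫ v, m v * (if t ≤ v.1 then (1 : ℝ) else 0) ∂μ))) ∧
    (∀ g₀ : ℝ → ℝ, IntegrableOn g₀ (Set.Ioo (0 : ℝ) 1) →
      ContinuousAt g₀ q₁star →
      (∀ t ∈ Set.Icc (0 : ℝ) 1,
        (∫ v, m v * (if t ≤ v.1 then (1 : ℝ) else 0) ∂μ) = ∫ s in t..(1 : ℝ), g₀ s) →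
      HasDerivAt (fun t => ∫ v, m v * (if t ≤ v.1 then (1 : ℝ) else 0) ∂μ)
        (-(g₀ q₁star)) q₁star) := by
  refine ⟨fun t ht => ?_, fun g₀ hg hc hΦ => ?_⟩
  · have hψinv_meas : AEMeasurable (fun v : ℝ × ℝ => ψinv v.2) μ :=
      aemeasurable_comp_snd_of_monotoneOn measurableSet_Ioo
        (hψrange ▸ monotoneOn_range_of_leftInverse hψm hψinv) (ae_snd_mem_Ioo habs hsupp)
    have hev : ∀ᶠ q₂ in nhdsWithin (1 : ℝ) (Iio 1), q₂ ∈ Ioo (0 : ℝ) 1 :=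
      Ioo_mem_nhdsLT zero_lt_one
    refine Filter.Tendsto.congr' (hev.mono fun q₂ hq₂ => (hG₀ (t, q₂) ht hq₂).symm) ?_
    refine tendsto_integral_filter_of_dominated_convergence (fun v => ‖m v‖)
      (Filter.Eventually.of_forall fun q₂ => ?_)
      (Filter.Eventually.of_forall fun q₂ => Filter.Eventually.of_forall fun v => ?_)
      hm.norm (Filter.Eventually.of_forall fun v => ?_)
    · refine (hm.aestronglyMeasurable.mul (aestronglyMeasurable_ite_le aemeasurable_const
        measurable_fst.aemeasurable)).mul (aestronglyMeasurable_ite_le ?_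
        measurable_fst.aemeasurable)
      exact hφc.measurable.comp_aemeasurable
        ((hψinv_meas.sub aemeasurable_const).add aemeasurable_const)
    · split_ifs <;> simp
    · refine tendsto_const_nhds.congr' ?_
      have hψv : ψ (ψinv v.2) ∈ Ioo (0 : ℝ) 1 := hψrange ▸ mem_range_self _
      filter_upwards [Ioo_mem_nhdsLT hψv.2] with q₂ hq₂
      obtain ⟨z, rfl⟩ : q₂ ∈ range ψ := hψrange ▸ ⟨hψv.1.trans hq₂.1, hq₂.2⟩
      obtain ⟨x, rfl⟩ : t ∈ range φ := hφrange ▸ ht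
      have hz : ψinv v.2 < z := hψm.lt_iff_lt.1 hq₂.1
      by_cases hv : φ x ≤ v.1
      · have hle : φ (ψinv v.2 - z + x) ≤ v.1 := (hφm.monotone (by linarith)).trans hv
        simp [hv, hψinv, hφinv, hle]
      · simp [hv]
  · refine (hasDerivAt_integral_left_of_integrableOn_Ioo hg hq hc).congr_of_eventuallyEq ?_
    filter_upwards [Icc_mem_nhds hq.1 hq.2] with t ht using hΦ t ht
end

section
/- Let n ≥ 1. Then Fₙ is Cauchy continuous on (0,1)ⁿ: for every Cauchy sequence (aₘ) contained in (0,1)ⁿ, the sequence (Fₙ(aₘ)) is a Cauchy sequence in ℝ. In particular, for every q* ∈ (0,1)ⁿ and δ > 0, Fₙ restricted to Ñ_n(q*,δ) admits a unique continuous extension to the closure of Ñ_n(q*,δ). -/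
open Set MeasureTheory

/-- `Ñ_n(a,δ) = {x ∈ (0,1)ⁿ : ‖x − a‖ < δ}` with the Euclidean norm. -/
def nbhdE (n : ℕ) (a : EuclideanSpace ℝ (Fin n)) (δ : ℝ) :
    Set (EuclideanSpace ℝ (Fin n)) :=
  {x : EuclideanSpace ℝ (Fin n) |
    (∀ i : Fin n, x i ∈ Set.Ioo (0 : ℝ) 1) ∧ ‖x - a‖ < δ}

open Filter Topology

/-- Coordinate hyperplanes of Euclidean space are Lebesgue-null. -/
theorem EuclideanSpace.volume_coord_eq {ι : Type*} [Fintype ι] (i : ι) (c : ℝ) :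
    volume {v : EuclideanSpace ℝ ι | v i = c} = 0 := by
  have h := (PiLp.volume_preserving_ofLp ι).measure_preimage
    (s := {f : ι → ℝ | f i = c})
    (measurableSet_eq_fun (measurable_pi_apply i) measurable_const).nullMeasurableSet
  exact h.trans (Measure.pi_hyperplane (fun _ : ι => (volume : Measure ℝ)) i c)

/-- If `μ` is absolutely continuous and `m` is `μ`-integrable, the integral of `m` over the open
lower orthant with corner `q` depends continuously on `q`. -/
theorem continuous_integral_orthant {ι : Type*} [Fintype ι] {μ : Measure (EuclideanSpace ℝ ι)}
    (habs : μ ≪ volume) {m : EuclideanSpace ℝ ι → ℝ} (hm : Integrable m μ) :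
    Continuous fun q : EuclideanSpace ℝ ι =>
      ∫ v, {v : EuclideanSpace ℝ ι | ∀ i, v i < q i}.indicator m v ∂μ := by
  refine continuous_iff_continuousAt.2 fun q => ?_
  refine continuousAt_of_dominated (bound := fun v => ‖m v‖) (.of_forall fun x => ?_)
    (.of_forall fun x => .of_forall fun v => ?_) hm.norm ?_
  · have hs : MeasurableSet {v : EuclideanSpace ℝ ι | ∀ i, v i < x i} := by
      rw [ofPred_forall]
      exact MeasurableSet.iInter fun i => measurableSet_lt (by fun_prop) measurable_const
    exact hm.aestronglyMeasurable.indicator hs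
  · exact norm_indicator_le_norm_self m v
  · have hne : ∀ᵐ v ∂μ, ∀ i, v i ≠ q i :=
      ae_all_iff.2 fun i => habs.ae_le (measure_eq_zero_iff_ae_notMem.1
        (EuclideanSpace.volume_coord_eq i (q i)))
    filter_upwards [hne] with v hv
    have hcont (i : ι) : Tendsto (fun x : EuclideanSpace ℝ ι => x i) (𝓝 q) (𝓝 (q i)) :=
      (by fun_prop : Continuous fun x : EuclideanSpace ℝ ι => x i).tendsto q
    have hiff : ∀ᶠ x in 𝓝 q, ∀ i, (v i < x i ↔ v i < q i) := by
      refine eventually_all.2 fun i => ?_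
      rcases (hv i).lt_or_gt with h | h
      · filter_upwards [(hcont i).eventually_const_lt h] with x hx
        exact iff_of_true hx h
      · filter_upwards [(hcont i).eventually_lt_const h] with x hx
        exact iff_of_false hx.not_gt h.not_gt
    refine continuousAt_const.congr
      (f := fun _ => {v : EuclideanSpace ℝ ι | ∀ i, v i < q i}.indicator m v) ?_
    filter_upwards [hiff] with x hx
    simp [indicator, hx]

/-- With `μ` a probability measure on ℝⁿ (`n ≥ 1`) absolutely
continuous w.r.t. Lebesgue measure, `m` μ-integrable, and
`Fₙ(q) = ∫ m(v)·𝟙{vᵢ < qᵢ ∀i} dμ`: `Fₙ` is Cauchy continuous on `(0,1)ⁿ`,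
and for every `q* ∈ (0,1)ⁿ` and `δ > 0`, `Fₙ` restricted to `Ñ_n(q*,δ)`
admits a unique continuous extension to the closure of `Ñ_n(q*,δ)`. -/
theorem stmt9 (n : ℕ) (hn : 1 ≤ n)
    (μ : Measure (EuclideanSpace ℝ (Fin n))) [IsProbabilityMeasure μ]
    (habs : μ ≪ volume)
    (m : EuclideanSpace ℝ (Fin n) → ℝ) (hm : Integrable m μ)
    (F : EuclideanSpace ℝ (Fin n) → ℝ)
    (hF : ∀ q, F q = ∫ v, (if ∀ i : Fin n, v i < q i then m v else 0) ∂μ) :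
    (∀ a : ℕ → EuclideanSpace ℝ (Fin n),
      (∀ k, ∀ i : Fin n, a k i ∈ Set.Ioo (0 : ℝ) 1) → CauchySeq a →
      CauchySeq (fun k => F (a k))) ∧
    (∀ qstar : EuclideanSpace ℝ (Fin n), (∀ i : Fin n, qstar i ∈ Set.Ioo (0 : ℝ) 1) →
      ∀ δ : ℝ, 0 < δ →
      ∃ fbar : EuclideanSpace ℝ (Fin n) → ℝ,
        ContinuousOn fbar (closure (nbhdE n qstar δ)) ∧
        (∀ x ∈ nbhdE n qstar δ, fbar x = F x) ∧
        ∀ g : EuclideanSpace ℝ (Fin n) → ℝ,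
          ContinuousOn g (closure (nbhdE n qstar δ)) →
          (∀ x ∈ nbhdE n qstar δ, g x = F x) →
          ∀ x ∈ closure (nbhdE n qstar δ), g x = fbar x) := by
  have hcont : Continuous F := by
    convert continuous_integral_orthant habs hm using 2 with q
    rw [hF]
    congr with v
    simp only [indicator, mem_ofPred_eq]
    congr
  refine ⟨fun a _ ha => ?_, fun qstar _ δ _ => ⟨F, hcont.continuousOn, fun _ _ => rfl, ?_⟩⟩
  · obtain ⟨l, hl⟩ := cauchySeq_tendsto_of_complete ha
    exact ((hcont.tendsto l).comp hl).cauchySeq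
  · intro g hg hgF
    exact EqOn.of_subset_closure hgF hg hcont.continuousOn subset_closure Subset.rfl
end

section
/- Let (Ω, 𝔉, P) be a probability space, let X, Y, W : Ω → ℝ be measurable, and suppose there is a measurable function φ : ℝ × ℝ → ℝ such that X = φ(Y, W) P-almost surely. Then the pushforward law of ω ↦ (X(ω), Y(ω), W(ω)) on ℝ³ is not absolutely continuous with respect to three-dimensional Lebesgue measure. (In particular, in the construction of Section 5.2 of Lee and Salanié (2018), where F⁻¹_{Ũ₀,₁}(V₀,₁) = F⁻¹_{Ũ₀,₂}(V₀,₂) − F⁻¹_{Ũ₁,₂}(V₁,₂) holds by construction, the vector (V₀,₁, V₀,₂, V₁,₂) cannot be absolutely continuous with support [0,1]³, so their Assumption 3.2 fails.) -/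
open Set MeasureTheory

/-- The graph of a measurable function, with the value in the first coordinate, is a null set for
the product of a measure vanishing on singletons with any s-finite measure. -/
theorem measure_prod_graph_eq_zero {α β : Type*} [MeasurableSpace α] [MeasurableSpace β]
    [MeasurableEq β] (μ : Measure β) (ν : Measure α) [SFinite μ] [SFinite ν] [NullSingletonClass μ]
    {f : α → β} (hf : Measurable f) :
    μ.prod ν {p : β × α | p.1 = f p.2} = 0 := by
  rw [Measure.prod_apply_symm (measurableSet_eq_fun measurable_fst (hf.fun_comp measurable_snd))]
  simp

/-- If `(Ω, 𝔉, P)` is a probability space, `X, Y, W : Ω → ℝ`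
are measurable, and `X = φ(Y, W)` P-a.s. for a measurable `φ : ℝ × ℝ → ℝ`,
then the law of `ω ↦ (X ω, Y ω, W ω)` on ℝ³ is not absolutely continuous
with respect to three-dimensional Lebesgue measure. -/
theorem stmt12 {Ω : Type*} [MeasurableSpace Ω]
    (P : Measure Ω) [IsProbabilityMeasure P]
    (X Y W : Ω → ℝ) (hX : Measurable X) (hY : Measurable Y) (hW : Measurable W)
    (φ : ℝ × ℝ → ℝ) (hφ : Measurable φ)
    (hXeq : ∀ᵐ ω ∂P, X ω = φ (Y ω, W ω)) :
    ¬ (P.map (fun ω => (X ω, Y ω, W ω)) ≪ (volume : Measure (ℝ × ℝ × ℝ))) := by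
  intro hac
  have hne := ae_of_ae_map (by fun_prop : AEMeasurable (fun ω => (X ω, Y ω, W ω)) P)
    (measure_eq_zero_iff_ae_notMem.mp (hac (measure_prod_graph_eq_zero volume volume hφ)))
  obtain ⟨ω, h, h'⟩ := (hXeq.and hne).exists
  exact h' h
end
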